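/- arXiv:math/0412312 — 6 statements merged into one kernel-verified Lean document; each statement's English description precedes it below -/
import Mathlib

section
/- Let u, v, w ∈ ℝ⁷ be linearly independent. The 3-dimensional subspace V = span_ℝ{u, v, w} is closed under the cross product (i.e. a × b ∈ V for all a, b ∈ V) if and only if the 1-form x ↦ (∗φ)(u, v, w, x) is identically zero on ℝ⁷. -/
/-!
STATEMENT 0: For linearly independent u, v, w ∈ ℝ⁷, the subspace
V = span{u,v,w} is closed under the G₂ cross product iff the 1-form
x ↦ (∗φ)(u,v,w,x) vanishes identically.
-/

noncomputable section

/-- ℝ⁷ with coordinates (x₀,x₁,x₂,x₃,y₁,y₂,y₃) indexed 0,…,6. -/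
abbrev V7 := Fin 7 → ℝ

/-- Standard basis vector. -/
def e7 (k : Fin 7) : V7 := fun j => if j = k then 1 else 0

/-- The wedge of three coordinate 1-forms, `(e^p ∧ e^q ∧ e^r)(a,b,c)`. -/
def form3 (p q r : Fin 7) (a b c : V7) : ℝ :=
  Matrix.det !![a p, a q, a r; b p, b q, b r; c p, c q, c r]

/-- The standard G₂ 3-form φ = f¹∧f²∧f³ + f¹∧(e⁰∧e¹ − e²∧e³)
    + f²∧(e⁰∧e² − e³∧e¹) + f³∧(e⁰∧e³ − e¹∧e²), with e⁰,e¹,e²,e³,f¹,f²,f³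
    the coordinate 1-forms indexed 0,1,2,3,4,5,6. -/
def phi7 (a b c : V7) : ℝ :=
  form3 4 5 6 a b c
    + (form3 4 0 1 a b c - form3 4 2 3 a b c)
    + (form3 5 0 2 a b c - form3 5 3 1 a b c)
    + (form3 6 0 3 a b c - form3 6 1 2 a b c)

/-- The wedge of four coordinate 1-forms. -/
def form4 (p q r s : Fin 7) (a b c d : V7) : ℝ :=
  Matrix.det !![a p, a q, a r, a s; b p, b q, b r, b s;
                c p, c q, c r, c s; d p, d q, d r, d s]

/-- The dual 4-form ∗φ = e⁰∧e¹∧e²∧e³ − f²∧f³∧(e⁰∧e¹ − e²∧e³)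
    − f³∧f¹∧(e⁰∧e² − e³∧e¹) − f¹∧f²∧(e⁰∧e³ − e¹∧e²). -/
def starphi7 (a b c d : V7) : ℝ :=
  form4 0 1 2 3 a b c d
    - (form4 5 6 0 1 a b c d - form4 5 6 2 3 a b c d)
    - (form4 6 4 0 2 a b c d - form4 6 4 3 1 a b c d)
    - (form4 4 5 0 3 a b c d - form4 4 5 1 2 a b c d)

/-- The cross product, characterized by ⟨u × v, z⟩ = φ(u,v,z) for the
    standard inner product; its k-th coordinate is φ(u,v,e_k). -/
def cross7 (a b : V7) : V7 := fun k => phi7 a b (e7 k)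

/-!
The 1-form `(∗φ)(a, b, c, ·)` is dual to `χ(a, b, c) = a × (b × c) + ⟨a, b⟩ c - ⟨a, c⟩ b`, so `χ`
is alternating; in particular `χ(n, n, z) = 0`, which gives `n × (n × z) = ⟨n, z⟩ n - ⟨n, n⟩ z`.

If `V = span {u, v, w}` is closed under `×`, then `χ(u, v, w)` lies in `V`; being orthogonal to `V`
as well, it vanishes. Conversely, if `χ(u, v, w) = 0`, then `χ` vanishes on all of `V`. For
`a, b ∈ V` choose a nonzero `n ∈ V` orthogonal to both, which exists since `dim V = 3`. Then
`n × (a × b) = χ(n, a, b) = 0`, so `a × b` is a multiple of `n` by the double cross formula.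
-/

open scoped Matrix

theorem range_vec_three {α : Type*} (u v w : α) : Set.range ![u, v, w] = {u, v, w} := by
  simp only [Matrix.range_cons, Matrix.range_empty, Set.union_empty, Set.singleton_union]

theorem alternatingMap_eq_zero_of_forall_mem_span {R M ι : Type*} [CommRing R] [AddCommGroup M]
    [Module R M] [Finite ι] (f : M [⋀^ι]→ₗ[R] R) {v : ι → M} (hv : f v = 0) {x : ι → M}
    (hx : ∀ i, x i ∈ Submodule.span R (Set.range v)) : f x = 0 := by
  classical
  have := Fintype.ofFinite ι
  have hcoeff (i : ι) : ∃ c : ι → R, Fintype.linearCombination R v c = x i := by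
    rw [← LinearMap.mem_range, Fintype.range_linearCombination]
    exact hx i
  choose c hc using hcoeff
  have hpull : f.compLinearMap (Fintype.linearCombination R v) = 0 := by
    rw [← AlternatingMap.map_basis_eq_zero_iff (Pi.basisFun R ι)]
    simpa [Function.comp_def] using hv
  have hfc : f (fun i ↦ Fintype.linearCombination R v (c i)) = 0 := DFunLike.congr_fun hpull c
  simpa only [hc] using hfc

theorem exists_mem_ne_zero_map_eq_zero {K M N : Type*} [Field K] [AddCommGroup M] [Module K M]
    [AddCommGroup N] [Module K N] [FiniteDimensional K N]
    {W : Submodule K M} (f : M →ₗ[K] N) (hW : Module.finrank K N < Module.finrank K W) :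
    ∃ x ∈ W, x ≠ 0 ∧ f x = 0 := by
  have : FiniteDimensional K W := .of_finrank_pos (Nat.zero_lt_of_lt hW)
  obtain ⟨x, hfx, hx⟩ := Submodule.exists_mem_ne_zero_of_ne_bot
    (LinearMap.ker_ne_bot_of_finrank_lt (f := f.domRestrict W) hW)
  exact ⟨x, x.2, by simpa using hx, by simpa using hfx⟩

theorem exists_mem_ne_zero_dotProduct_eq_zero {K ι : Type*} [Field K] [Fintype ι]
    {W : Submodule K (ι → K)} (hW : 2 < Module.finrank K W) (a b : ι → K) :
    ∃ n ∈ W, n ≠ 0 ∧ n ⬝ᵥ a = 0 ∧ n ⬝ᵥ b = 0 := by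
  obtain ⟨n, hnW, hn, hab⟩ :=
    exists_mem_ne_zero_map_eq_zero (W := W) (Matrix.of ![a, b]).mulVecLin (by simpa using hW)
  refine ⟨n, hnW, hn, ?_, ?_⟩
  · rw [dotProduct_comm]
    exact congrFun hab 0
  · rw [dotProduct_comm]
    exact congrFun hab 1

theorem det_fin_four_eq_laplace {R : Type*} [CommRing R] (A : Matrix (Fin 4) (Fin 4) R) :
    A.det =
      (A 0 0 * A 1 1 - A 0 1 * A 1 0) * (A 2 2 * A 3 3 - A 2 3 * A 3 2)
      - (A 0 0 * A 1 2 - A 0 2 * A 1 0) * (A 2 1 * A 3 3 - A 2 3 * A 3 1)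
      + (A 0 0 * A 1 3 - A 0 3 * A 1 0) * (A 2 1 * A 3 2 - A 2 2 * A 3 1)
      + (A 0 1 * A 1 2 - A 0 2 * A 1 1) * (A 2 0 * A 3 3 - A 2 3 * A 3 0)
      - (A 0 1 * A 1 3 - A 0 3 * A 1 1) * (A 2 0 * A 3 2 - A 2 2 * A 3 0)
      + (A 0 2 * A 1 3 - A 0 3 * A 1 2) * (A 2 0 * A 3 1 - A 2 1 * A 3 0) := by
  simp only [Matrix.det_succ_row_zero A, Fin.sum_univ_four, Matrix.det_fin_three,
    Matrix.submatrix_apply, Fin.succAbove, Fin.reduceSucc, Fin.reduceCastSucc, Fin.reduceLT,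
    ↓reduceIte, Fin.succ_zero_eq_one, Fin.succ_one_eq_two, Fin.castSucc_zero, Fin.castSucc_one,
    Fin.isValue, Fin.coe_ofNat_eq_mod]
  ring

/-- The wedge `dx_{p 0} ∧ ⋯ ∧ dx_{p (k - 1)}` of coordinate 1-forms, as an alternating map. -/
def wedgeCoord {R ι : Type*} [CommRing R] {k : ℕ} (p : Fin k → ι) :
    (ι → R) [⋀^Fin k]→ₗ[R] R :=
  Matrix.detRowAlternating.compLinearMap (LinearMap.funLeft R R p)

/-- The 4-form `∗φ` bundled as an alternating map. -/
def starphi7Form : V7 [⋀^Fin 4]→ₗ[ℝ] ℝ :=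
  wedgeCoord ![0, 1, 2, 3]
    - (wedgeCoord ![5, 6, 0, 1] - wedgeCoord ![5, 6, 2, 3])
    - (wedgeCoord ![6, 4, 0, 2] - wedgeCoord ![6, 4, 3, 1])
    - (wedgeCoord ![4, 5, 0, 3] - wedgeCoord ![4, 5, 1, 2])

theorem form4_eq_wedgeCoord (p q r s : Fin 7) (a b c d : V7) :
    form4 p q r s a b c d = wedgeCoord ![p, q, r, s] ![a, b, c, d] := by
  refine congrArg Matrix.det (Matrix.ext fun i j ↦ ?_)
  fin_cases i <;> fin_cases j <;> rfl

theorem starphi7_eq_starphi7Form (a b c d : V7) :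
    starphi7 a b c d = starphi7Form ![a, b, c, d] := by
  simp only [starphi7, form4_eq_wedgeCoord]
  rfl

theorem starphi7_eq_neg_curryLeft (a b c x : V7) :
    starphi7 a b c x = -starphi7Form.curryLeft x ![a, b, c] := by
  have hrot : ![x, a, b, c] ∘ finRotate 4 = ![a, b, c, x] := by
    funext i
    fin_cases i <;> rfl
  rw [starphi7_eq_starphi7Form, AlternatingMap.curryLeft_apply_apply, ← hrot,
    AlternatingMap.map_perm, sign_finRotate]
  simp [Units.smul_def]

theorem starphi7_self_left (a b x : V7) : starphi7 a a b x = 0 := by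
  rw [starphi7_eq_starphi7Form]
  exact starphi7Form.map_eq_zero_of_eq _ (i := 0) (j := 1) rfl (by decide)

theorem cross7_eq (a b : V7) :
    cross7 a b =
      ![a 1 * b 4 - a 4 * b 1 + (a 2 * b 5 - a 5 * b 2) + (a 3 * b 6 - a 6 * b 3),
        a 4 * b 0 - a 0 * b 4 - (a 5 * b 3 - a 3 * b 5) - (a 2 * b 6 - a 6 * b 2),
        a 5 * b 0 - a 0 * b 5 - (a 3 * b 4 - a 4 * b 3) - (a 6 * b 1 - a 1 * b 6),
        a 6 * b 0 - a 0 * b 6 - (a 4 * b 2 - a 2 * b 4) - (a 1 * b 5 - a 5 * b 1),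
        a 5 * b 6 - a 6 * b 5 + (a 0 * b 1 - a 1 * b 0) - (a 2 * b 3 - a 3 * b 2),
        a 6 * b 4 - a 4 * b 6 + (a 0 * b 2 - a 2 * b 0) - (a 3 * b 1 - a 1 * b 3),
        a 4 * b 5 - a 5 * b 4 + (a 0 * b 3 - a 3 * b 0) - (a 1 * b 2 - a 2 * b 1)] := by
  funext k
  fin_cases k <;>
    (simp only [cross7, phi7, form3, Matrix.det_fin_three, e7, Matrix.of_apply, Matrix.cons_val,
      Fin.reduceFinMk, Fin.reduceEq, ↓reduceIte, Fin.zero_eta, Fin.mk_one, Fin.isValue]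
     ring)

theorem cross7_zero_right (a : V7) : cross7 a 0 = 0 := by
  funext k
  simp [cross7, phi7, form3, Matrix.det_fin_three]

/-- The vector `χ(a, b, c)` dual to the 1-form `(∗φ)(a, b, c, ·)`; it is `-1/2` times the
associator `(ab)c - a(bc)` of imaginary octonions. -/
def associator7 (a b c : V7) : V7 :=
  cross7 a (cross7 b c) + (a ⬝ᵥ b) • c - (a ⬝ᵥ c) • b

theorem starphi7_eq_associator7_dotProduct (a b c x : V7) :
    starphi7 a b c x = associator7 a b c ⬝ᵥ x := by
  simp only [starphi7, form4, det_fin_four_eq_laplace, Matrix.of_apply, associator7, cross7_eq,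
    dotProduct, Fin.sum_univ_seven, Pi.add_apply, Pi.sub_apply, Pi.smul_apply, smul_eq_mul,
    Matrix.cons_val]
  ring

theorem associator7_eq_zero_iff {a b c : V7} :
    associator7 a b c = 0 ↔ ∀ x, starphi7 a b c x = 0 := by
  simp only [starphi7_eq_associator7_dotProduct, dotProduct_eq_zero_iff]

theorem cross7_cross7_self (a b : V7) : cross7 a (cross7 a b) = (a ⬝ᵥ b) • a - (a ⬝ᵥ a) • b := by
  have hassoc : associator7 a a b = 0 := associator7_eq_zero_iff.mpr (starphi7_self_left a b)
  rw [associator7] at hassoc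
  linear_combination (norm := module) hassoc

theorem mem_span_singleton_of_cross7_eq_zero {n z : V7} (hn : n ≠ 0) (hnz : cross7 n z = 0) :
    z ∈ Submodule.span ℝ {n} := by
  have hnn : n ⬝ᵥ n ≠ 0 := dotProduct_self_eq_zero.not.mpr hn
  have hsmul : (n ⬝ᵥ n) • z = (n ⬝ᵥ z) • n := by
    have hdouble := cross7_cross7_self n z
    rw [hnz, cross7_zero_right] at hdouble
    exact (sub_eq_zero.mp hdouble.symm).symm
  rw [← Submodule.smul_mem_iff _ hnn, hsmul]
  exact Submodule.smul_mem _ _ (Submodule.mem_span_singleton_self n)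

theorem cross7_mem_of_associator7_eq_zero {W : Submodule ℝ V7} (hW : 2 < Module.finrank ℝ W)
    (hassoc : ∀ a ∈ W, ∀ b ∈ W, ∀ c ∈ W, associator7 a b c = 0) {a b : V7} (ha : a ∈ W)
    (hb : b ∈ W) : cross7 a b ∈ W := by
  obtain ⟨n, hnW, hn, hna, hnb⟩ := exists_mem_ne_zero_dotProduct_eq_zero hW a b
  have hcross : cross7 n (cross7 a b) = 0 := by
    simpa [associator7, hna, hnb] using hassoc n hnW a ha b hb
  have hspan : Submodule.span ℝ {n} ≤ W := (Submodule.span_singleton_le_iff_mem n W).mpr hnW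
  exact hspan (mem_span_singleton_of_cross7_eq_zero hn hcross)

theorem starphi7_eq_zero_of_mem_span {u v w x : V7} (hx : x ∈ Submodule.span ℝ {u, v, w}) :
    starphi7 u v w x = 0 := by
  have hdep : ¬LinearIndependent ℝ ![x, u, v, w] := fun hli ↦
    (linearIndependent_finCons.mp hli).2 (by rwa [range_vec_three])
  rw [starphi7_eq_neg_curryLeft, AlternatingMap.curryLeft_apply_apply,
    starphi7Form.map_linearDependent _ hdep, neg_zero]

theorem associator7_eq_zero_of_mem_span {u v w : V7} (huvw : associator7 u v w = 0) {a b c : V7}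
    (ha : a ∈ Submodule.span ℝ {u, v, w}) (hb : b ∈ Submodule.span ℝ {u, v, w})
    (hc : c ∈ Submodule.span ℝ {u, v, w}) : associator7 a b c = 0 := by
  rw [associator7_eq_zero_iff] at huvw ⊢
  intro x
  rw [starphi7_eq_neg_curryLeft, neg_eq_zero]
  refine alternatingMap_eq_zero_of_forall_mem_span _ (v := ![u, v, w]) ?_ ?_
  · simpa only [starphi7_eq_neg_curryLeft, neg_eq_zero] using huvw x
  · rw [range_vec_three]
    simpa [Fin.forall_fin_succ] using ⟨ha, hb, hc⟩

theorem associator7_eq_zero_of_self_mem_span {u v w : V7}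
    (hmem : associator7 u v w ∈ Submodule.span ℝ {u, v, w}) : associator7 u v w = 0 := by
  rw [← dotProduct_self_eq_zero, ← starphi7_eq_associator7_dotProduct]
  exact starphi7_eq_zero_of_mem_span hmem

theorem associator7_mem {W : Submodule ℝ V7} (hW : ∀ a ∈ W, ∀ b ∈ W, cross7 a b ∈ W) {a b c : V7}
    (ha : a ∈ W) (hb : b ∈ W) (hc : c ∈ W) : associator7 a b c ∈ W :=
  W.sub_mem (W.add_mem (hW a ha _ (hW b hb c hc)) (W.smul_mem _ hc)) (W.smul_mem _ hb)

theorem stmt0 (u v w : V7) (h : LinearIndependent ℝ ![u, v, w]) :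
    (∀ a ∈ Submodule.span ℝ ({u, v, w} : Set V7),
      ∀ b ∈ Submodule.span ℝ ({u, v, w} : Set V7),
        cross7 a b ∈ Submodule.span ℝ ({u, v, w} : Set V7))
      ↔ (∀ x : V7, starphi7 u v w x = 0) := by
  rw [← associator7_eq_zero_iff]
  constructor
  · intro hclosed
    refine associator7_eq_zero_of_self_mem_span (associator7_mem hclosed ?_ ?_ ?_) <;>
      exact Submodule.subset_span (by simp)
  · intro hassoc a ha b hb
    have hrank : Module.finrank ℝ (Submodule.span ℝ ({u, v, w} : Set V7)) = 3 := by
      rw [← range_vec_three, finrank_span_eq_card h, Fintype.card_fin]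
    exact cross7_mem_of_associator7_eq_zero (by simp [hrank])
      (fun _ hx _ hy _ hz ↦ associator7_eq_zero_of_mem_span hassoc hx hy hz) ha hb
end
end

section
/- Let λ₁, …, λ_p be real numbers. The following are equivalent: (i) Im ∏_{j=1}^{p} (1 + i λ_j s) = 0 for every real s; (ii) every odd-degree elementary symmetric polynomial of λ₁, …, λ_p vanishes, i.e. e_k(λ₁,…,λ_p) = 0 for all odd k; (iii) the multiset {λ₁, …, λ_p} is invariant under negation, i.e. equals the multiset {−λ₁, …, −λ_p} (the λ_j occur in pairs of opposite signs, together with zeros). -/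
/-!
Let `P = ∏ⱼ (1 + λⱼ X)`, whose coefficients are the elementary symmetric polynomials of the `λⱼ`.
Since `P` is real, the conjugate of `P(is)` is `P(-is)`, so (i) says that `P(X)` and `P(-X)` agree
on the imaginary axis, hence are equal, which is (ii). As `eₖ(-λ) = (-1)ᵏ eₖ(λ)`, (ii) also says
that `λ` and `-λ` have the same elementary symmetric polynomials, and by Vieta these determine a
multiset of given cardinality, as the roots of `∏ⱼ (X - λⱼ)`.
-/

open Polynomial

section OddCoefficients

theorem coeff_comp_neg_X {R : Type*} [Ring R] (q : R[X]) (k : ℕ) :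
    (q.comp (-X)).coeff k = (-1) ^ k * q.coeff k := by
  have neg_X_eq : (-X : R[X]) = C (-1) * X := by simp
  rw [neg_X_eq, comp_C_mul_X_coeff, ((Commute.neg_one_left _).pow_left k).eq]

variable {R : Type*} [Ring R] [NoZeroDivisors R] [NeZero (2 : R)]

theorem forall_neg_one_pow_mul_eq_self_iff (a : ℕ → R) :
    (∀ k, (-1) ^ k * a k = a k) ↔ ∀ k, Odd k → a k = 0 := by
  refine forall_congr' fun k => ?_
  rcases k.even_or_odd with even | odd
  · simp [even.neg_one_pow, Nat.not_odd_iff_even.mpr even]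
  · simp [odd, odd.neg_one_pow, neg_eq_iff_add_eq_zero, ← two_mul, NeZero.ne]

theorem comp_neg_X_eq_self_iff (q : R[X]) :
    q.comp (-X) = q ↔ ∀ k, Odd k → q.coeff k = 0 := by
  simp only [Polynomial.ext_iff, coeff_comp_neg_X, forall_neg_one_pow_mul_eq_self_iff]

end OddCoefficients

theorem im_aeval_I_mul_eq_zero_iff (q : ℝ[X]) (s : ℝ) :
    (aeval (Complex.I * s) q).im = 0 ↔
      aeval (Complex.I * s) (q.comp (-X)) = aeval (Complex.I * s) q := by
  have conj_I_mul : -(Complex.I * s) = (starRingEnd ℂ) (Complex.I * s) := by simp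
  rw [← Complex.conj_eq_iff_im, ← aeval_conj, aeval_comp, map_neg, aeval_X, conj_I_mul]

theorem eq_of_forall_aeval_I_mul_eq {q r : ℝ[X]}
    (h : ∀ s : ℝ, aeval (Complex.I * s) q = aeval (Complex.I * s) r) : q = r := by
  have injective_I_mul : Function.Injective fun s : ℝ => Complex.I * s :=
    (mul_right_injective₀ Complex.I_ne_zero).comp Complex.ofReal_injective
  apply map_injective _ (algebraMap ℝ ℂ).injective
  refine eq_of_infinite_eval_eq _ _ ((Set.infinite_range_of_injective injective_I_mul).mono ?_)
  rintro _ ⟨s, rfl⟩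
  simpa only [Set.mem_ofPred_eq, eval_map_algebraMap] using h s

theorem forall_im_aeval_I_mul_eq_zero_iff (q : ℝ[X]) :
    (∀ s : ℝ, (aeval (Complex.I * s) q).im = 0) ↔ ∀ k, Odd k → q.coeff k = 0 := by
  simp only [im_aeval_I_mul_eq_zero_iff, ← comp_neg_X_eq_self_iff]
  exact ⟨eq_of_forall_aeval_I_mul_eq, fun h _ => by rw [h]⟩

section ElementarySymmetric

theorem esymm_cons_succ {R : Type*} [CommSemiring R] (a : R) (m : Multiset R) (k : ℕ) :
    (a ::ₘ m).esymm (k + 1) = m.esymm (k + 1) + a * m.esymm k := by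
  simp [Multiset.esymm, Multiset.powersetCard_cons, Multiset.sum_map_mul_left]

theorem coeff_prod_one_add_C_mul_X {R : Type*} [CommSemiring R] (m : Multiset R) (k : ℕ) :
    (m.map fun x => 1 + C x * X).prod.coeff k = m.esymm k := by
  induction m using Multiset.induction_on generalizing k with
  | empty => cases k <;> simp [Multiset.esymm, coeff_one, Multiset.powersetCard_zero_right]
  | cons a m ih =>
    cases k with
    | zero => simp [Multiset.esymm, add_mul, mul_assoc, ih]
    | succ k => simp [esymm_cons_succ, add_mul, mul_assoc, ih]

variable {R : Type*} [CommRing R] [IsDomain R]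

theorem eq_iff_esymm_eq_of_card_eq {m n : Multiset R} (card_eq : m.card = n.card) :
    m = n ↔ ∀ k, m.esymm k = n.esymm k := by
  refine ⟨fun h _ => by rw [h], fun esymm_eq => ?_⟩
  have prod_eq : (m.map fun x => X - C x).prod = (n.map fun x => X - C x).prod := by
    simp only [Multiset.prod_X_sub_X_eq_sum_esymm, card_eq, esymm_eq]
  rw [← roots_multiset_prod_X_sub_C m, prod_eq, roots_multiset_prod_X_sub_C]

theorem map_neg_eq_self_iff_odd_esymm_eq_zero [NeZero (2 : R)] (m : Multiset R) :
    m.map Neg.neg = m ↔ ∀ k, Odd k → m.esymm k = 0 := by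
  simp only [eq_iff_esymm_eq_of_card_eq (m.card_map Neg.neg), Multiset.esymm_neg,
    forall_neg_one_pow_mul_eq_self_iff]

end ElementarySymmetric

theorem forall_im_prod_one_add_I_mul_eq_zero_iff (m : Multiset ℝ) :
    (∀ s : ℝ, (m.map fun x : ℝ => 1 + Complex.I * x * s).prod.im = 0) ↔
      ∀ k, Odd k → m.esymm k = 0 := by
  have prod_eq_aeval (s : ℝ) : (m.map fun x : ℝ => 1 + Complex.I * x * s).prod =
      aeval (Complex.I * s) (m.map fun x => 1 + C x * X).prod := by
    simp [map_multiset_prod, mul_left_comm, mul_assoc]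
  simp only [prod_eq_aeval, forall_im_aeval_I_mul_eq_zero_iff, coeff_prod_one_add_C_mul_X]

theorem stmt10 (p : ℕ) (l : Fin p → ℝ) :
    ((∀ s : ℝ, (∏ j, (1 + Complex.I * (l j : ℂ) * (s : ℂ))).im = 0) ↔
        (∀ k : ℕ, Odd k → (Finset.univ.val.map l).esymm k = 0)) ∧
      ((∀ k : ℕ, Odd k → (Finset.univ.val.map l).esymm k = 0) ↔
        (Finset.univ.val.map l).map (fun x => -x) = Finset.univ.val.map l) := by
  constructor
  · simpa only [Multiset.map_map, Function.comp_def, Finset.prod_map_val] using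
      forall_im_prod_one_add_I_mul_eq_zero_iff (Finset.univ.val.map l)
  · exact (map_neg_eq_self_iff_odd_esymm_eq_zero (Finset.univ.val.map l)).symm
end

section
/- Let n > p ≥ 1, let a, b ∈ ℝ, t > 0, and let S be a symmetric real p×p matrix. In ℂⁿ⁺¹ with standard basis e₀, …, e_n define E_j = cosh(t)·e_j + i·sinh(t)·Σ_{k=1}^{p} S_{jk} e_k for 1 ≤ j ≤ p, F_{p+1} = sinh(t)·e₀ + i·cosh(t)·e_{p+1}, and F_k = i·(sinh(t)/t)·e_k for p+2 ≤ k ≤ n. Let ω be the real alternating 2-form on ℂⁿ⁺¹ given by ω(u,v) = a·Σ_{k=1}^{n} Im(ū_k v_k) + b·Im(ū_{p+1} v_{p+1}). Then ω vanishes identically on the n-dimensional real span of {E₁, …, E_p, F_{p+1}, …, F_n}; i.e. this subspace is Lagrangian for ω. (This is the computation showing the conormal bundle of any submanifold of Sⁿ is Lagrangian for the Kähler form of the Stenzel metric.) -/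
/-!
STATEMENT 11: the Lagrangian condition for the conormal bundle construction in
the Stenzel metric.  With E_j = cosh t·e_j + i sinh t·Σₖ S_{jk} e_k (1 ≤ j ≤ p),
F_{p+1} = sinh t·e₀ + i cosh t·e_{p+1}, F_k = i (sinh t / t)·e_k (p+2 ≤ k ≤ n),
and ω(u,v) = a·Σ_{k=1}^n Im(ūₖ vₖ) + b·Im(ū_{p+1} v_{p+1}), the 2-form ω
vanishes identically on the real span of {E₁,…,E_p,F_{p+1},…,F_n}.
-/

noncomputable section

/-!
On `ℂ^ι` a weighted sum of the standard area forms of the coordinate lines vanishes on a pair of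
vectors as soon as, in each coordinate of nonzero weight, both are imaginary or one is zero. This
covers every pair of generators except two of the `E_j`. Those live in coordinates of a common
weight `a`, and `ω(E_i, E_j) = a cosh t sinh t (S_{ji} - S_{ij})`, which is zero because `S` is
symmetric.
-/

open Complex

section WeightedKahlerForm

variable {ι : Type*} [Fintype ι]

/-- The constant-coefficient diagonal 2-form `∑ k, w k * (i/2) dz_k ∧ dz̄_k` on `ℂ^ι`, as a real
bilinear form. It models a Kähler form at a point; the weights `w` may vanish or be negative. -/
def weightedKahlerForm (w : ι → ℝ) : LinearMap.BilinForm ℝ (ι → ℂ) :=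
  LinearMap.mk₂ ℝ (fun x y ↦ ∑ k, w k * (starRingEnd ℂ (x k) * y k).im)
    (fun x x' y ↦ by simp only [Pi.add_apply, map_add, add_mul, add_im, mul_add,
      Finset.sum_add_distrib])
    (fun r x y ↦ by simp [Finset.mul_sum, mul_assoc, mul_left_comm])
    (fun x y y' ↦ by simp only [Pi.add_apply, mul_add, add_im, Finset.sum_add_distrib])
    (fun r x y ↦ by simp [Finset.mul_sum, mul_left_comm])

theorem weightedKahlerForm_apply (w : ι → ℝ) (x y : ι → ℂ) :
    weightedKahlerForm w x y = ∑ k, w k * (starRingEnd ℂ (x k) * y k).im :=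
  rfl

theorem weightedKahlerForm_isAlt (w : ι → ℝ) : (weightedKahlerForm w).IsAlt := fun x ↦ by
  simp [weightedKahlerForm_apply, mul_comm]

theorem weightedKahlerForm_single_left [DecidableEq ι] (w : ι → ℝ) (k : ι) (z : ℂ) (y : ι → ℂ) :
    weightedKahlerForm w (Pi.single k z) y = w k * (starRingEnd ℂ z * y k).im := by
  rw [weightedKahlerForm_apply, Fintype.sum_eq_single k fun l hl ↦ by simp [hl], Pi.single_eq_same]

theorem weightedKahlerForm_eq_zero_of_re_eq_zero {w : ι → ℝ} {x y : ι → ℂ}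
    (hx : ∀ k, w k ≠ 0 → (x k).re = 0) (hy : ∀ k, w k ≠ 0 → (y k).re = 0) :
    weightedKahlerForm w x y = 0 := by
  refine Finset.sum_eq_zero fun k _ ↦ ?_
  by_cases hk : w k = 0
  · simp [hk]
  · simp [hx k hk, hy k hk]

end WeightedKahlerForm

section ConormalSubspace

variable {ι κ : Type*}

/-- The space of vectors which vanish in the tangent coordinates, selected by `σ`, and are imaginary
in every coordinate that carries a nonzero weight. It contains the fibre directions `F_k` of a
conormal bundle, `σ` being the inclusion of the coordinates `1, …, p`. -/
def conormalSubspace (w : ι → ℝ) (σ : κ → ι) : Submodule ℝ (ι → ℂ) where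
  carrier := {ν | (∀ k, w k ≠ 0 → (ν k).re = 0) ∧ ∀ j, ν (σ j) = 0}
  add_mem' hx hy := ⟨fun k hk ↦ by simp [hx.1 k hk, hy.1 k hk], fun j ↦ by simp [hx.2 j, hy.2 j]⟩
  zero_mem' := ⟨fun _ _ ↦ rfl, fun _ ↦ rfl⟩
  smul_mem' r _ hx := ⟨fun k hk ↦ by simp [hx.1 k hk], fun j ↦ by simp [hx.2 j]⟩

variable [DecidableEq ι] {w : ι → ℝ} {σ : κ → ι} {k : ι}

theorem single_mem_conormalSubspace {z : ℂ} (hσk : ∀ j, σ j ≠ k) (hz : w k ≠ 0 → z.re = 0) :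
    Pi.single k z ∈ conormalSubspace w σ := by
  refine ⟨fun l hl ↦ ?_, fun j ↦ Pi.single_eq_of_ne (hσk j) _⟩
  obtain rfl | hlk := eq_or_ne l k
  · simpa using hz hl
  · simp [hlk]

theorem single_I_mul_mem_conormalSubspace (hσk : ∀ j, σ j ≠ k) (r : ℝ) :
    Pi.single k (I * r) ∈ conormalSubspace w σ :=
  single_mem_conormalSubspace hσk fun _ ↦ by simp

end ConormalSubspace

section TangentVector

variable {ι κ : Type*} [DecidableEq ι] [Fintype κ]

/-- The vector `c e_{σ j} + i s ∑ k, S_{jk} e_{σ k}` of `ℂ^ι`, where `σ` selects the coordinates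
tangent to the submanifold. It is the lift of the `j`-th tangent direction to the conormal bundle,
with shape operator `S`; `c` and `s` stand for `cosh t` and `sinh t`. -/
def tangentVector (σ : κ → ι) (c s : ℝ) (S : Matrix κ κ ℝ) (j : κ) : ι → ℂ :=
  Pi.single (σ j) (c : ℂ) + ∑ k, Pi.single (σ k) (I * s * S j k)

theorem tangentVector_apply (σ : κ → ι) (c s : ℝ) (S : Matrix κ κ ℝ) (j : κ) (m : ι) :
    tangentVector σ c s S j m =
      (if m = σ j then (c : ℂ) else 0) + I * s * ∑ k, if m = σ k then (S j k : ℂ) else 0 := by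
  simp [tangentVector, Pi.single_apply, Finset.mul_sum]

theorem tangentVector_apply_of_injective [DecidableEq κ] {σ : κ → ι} (hσ : σ.Injective) (c s : ℝ)
    (S : Matrix κ κ ℝ) (j k : κ) :
    tangentVector σ c s S j (σ k) = (if k = j then (c : ℂ) else 0) + I * s * S j k := by
  simp [tangentVector_apply, hσ.eq_iff]

variable [Fintype ι] {w : ι → ℝ} {σ : κ → ι}

theorem weightedKahlerForm_tangentVector_left (w : ι → ℝ) (σ : κ → ι) (c s : ℝ)
    (S : Matrix κ κ ℝ) (j : κ) (y : ι → ℂ) :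
    weightedKahlerForm w (tangentVector σ c s S j) y =
      w (σ j) * (c * (y (σ j)).im) - ∑ k, w (σ k) * (s * S j k * (y (σ k)).re) := by
  simp [tangentVector, weightedKahlerForm_single_left, sub_eq_add_neg]

theorem weightedKahlerForm_tangentVector_eq_zero {y : ι → ℂ} (hy : ∀ k, y (σ k) = 0) (c s : ℝ)
    (S : Matrix κ κ ℝ) (j : κ) : weightedKahlerForm w (tangentVector σ c s S j) y = 0 := by
  simp [weightedKahlerForm_tangentVector_left, hy]

theorem weightedKahlerForm_tangentVector_tangentVector {a : ℝ} (hσ : σ.Injective)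
    (hw : ∀ k, w (σ k) = a) (c s : ℝ) (S : Matrix κ κ ℝ) (i j : κ) :
    weightedKahlerForm w (tangentVector σ c s S i) (tangentVector σ c s S j) =
      a * c * s * (S j i - S i j) := by
  classical
  have re_apply (k : κ) : (tangentVector σ c s S j (σ k)).re = if k = j then c else 0 := by
    rw [tangentVector_apply_of_injective hσ]; split_ifs <;> simp
  have im_apply : (tangentVector σ c s S j (σ i)).im = s * S j i := by
    rw [tangentVector_apply_of_injective hσ]; split_ifs <;> simp
  simp only [weightedKahlerForm_tangentVector_left, hw, re_apply, im_apply, mul_ite, mul_zero,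
    Finset.sum_ite_eq', Finset.mem_univ, if_true]
  ring

theorem weightedKahlerForm_eq_zero_of_mem_span {a c s : ℝ} {S : Matrix κ κ ℝ} (hS : S.IsSymm)
    (hσ : σ.Injective) (hw : ∀ k, w (σ k) = a) {N : Set (ι → ℂ)}
    (hN : N ⊆ conormalSubspace w σ)
    {x y : ι → ℂ} (hx : x ∈ Submodule.span ℝ (Set.range (tangentVector σ c s S) ∪ N))
    (hy : y ∈ Submodule.span ℝ (Set.range (tangentVector σ c s S) ∪ N)) :
    weightedKahlerForm w x y = 0 := by
  refine (Submodule.mem_bot ℝ).1 <| LinearMap.BilinMap.apply_apply_mem_of_mem_span ⊥ _ _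
    (weightedKahlerForm w) (fun u hu v hv ↦ (Submodule.mem_bot ℝ).2 ?_) x y hx hy
  rcases hu with ⟨i, rfl⟩ | hu <;> rcases hv with ⟨j, rfl⟩ | hv
  · rw [weightedKahlerForm_tangentVector_tangentVector hσ hw, hS.apply, sub_self, mul_zero]
  · exact weightedKahlerForm_tangentVector_eq_zero (hN hv).2 c s S i
  · exact (weightedKahlerForm_isAlt w).isRefl _ _
      (weightedKahlerForm_tangentVector_eq_zero (hN hu).2 c s S j)
  · exact weightedKahlerForm_eq_zero_of_re_eq_zero (hN hu).1 (hN hv).1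

end TangentVector

section Stenzel

variable {n p : ℕ}

/-- The coordinates `1, …, p` of `ℂ^{n+1}`, tangent to the submanifold; `j : Fin p` is sent to the
coordinate `j + 1` because the paper numbers tangent directions from `1`. -/
def tangentIndex (hpn : p ≤ n) (j : Fin p) : Fin (n + 1) :=
  (j.castLE hpn).succ

theorem tangentIndex_injective (hpn : p ≤ n) : (tangentIndex hpn).Injective :=
  (Fin.succ_injective n).comp (Fin.castLE_injective hpn)

theorem tangentIndex_ne_zero (hpn : p ≤ n) (j : Fin p) : tangentIndex hpn j ≠ 0 :=
  Fin.succ_ne_zero _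

theorem tangentIndex_ne_of_lt (hpn : p ≤ n) {k : Fin (n + 1)} (hk : p < k) (j : Fin p) :
    tangentIndex hpn j ≠ k :=
  Fin.ne_of_lt <| (Nat.succ_le_of_lt j.2).trans_lt hk

/-- The weights of the Stenzel Kähler form on `ℂ^{n+1}`: the coordinate `0` is absent, the others
have weight `a`, with an extra `b` in the conormal direction, whose coordinate is `q.succ`. -/
def stenzelWeight (a b : ℝ) (q : Fin n) : Fin (n + 1) → ℝ :=
  Fin.cons 0 fun k ↦ a + if k = q then b else 0

theorem stenzelWeight_tangentIndex (hpn : p < n) (a b : ℝ) (j : Fin p) :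
    stenzelWeight a b ⟨p, hpn⟩ (tangentIndex hpn.le j) = a := by
  simp [stenzelWeight, tangentIndex, Fin.ext_iff, j.2.ne]

theorem weightedKahlerForm_stenzelWeight (a b : ℝ) (q : Fin n) (x y : Fin (n + 1) → ℂ) :
    weightedKahlerForm (stenzelWeight a b q) x y =
      a * ∑ k : Fin n, (starRingEnd ℂ (x k.succ) * y k.succ).im +
        b * (starRingEnd ℂ (x q.succ) * y q.succ).im := by
  simp only [weightedKahlerForm_apply, stenzelWeight, Fin.sum_univ_succ, Fin.cons_zero,
    Fin.cons_succ, zero_mul, zero_add, add_mul, ite_mul, Finset.sum_add_distrib,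
    Finset.sum_ite_eq', Finset.mem_univ, if_true, Finset.mul_sum]

theorem single_zero_add_single_mem_conormalSubspace (hpn : p < n) (a b c s : ℝ) :
    Pi.single 0 (s : ℂ) + Pi.single (Fin.succ ⟨p, hpn⟩) (I * c) ∈
      conormalSubspace (stenzelWeight a b ⟨p, hpn⟩) (tangentIndex hpn.le) :=
  add_mem
    (single_mem_conormalSubspace (tangentIndex_ne_zero hpn.le) fun hweight ↦ (hweight rfl).elim)
    (single_I_mul_mem_conormalSubspace (tangentIndex_ne_of_lt hpn.le p.lt_succ_self) c)

end Stenzel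

theorem stmt11 (n p : ℕ) (hp : 1 ≤ p) (hpn : p < n)
    (a b t : ℝ) (ht : 0 < t)
    (S : Matrix (Fin p) (Fin p) ℝ) (hS : S.IsSymm)
    (E : Fin p → (Fin (n + 1) → ℂ))
    (hE : ∀ j : Fin p, E j = fun m : Fin (n + 1) =>
      (if (m : ℕ) = (j : ℕ) + 1 then (Real.cosh t : ℂ) else 0)
        + Complex.I * (Real.sinh t : ℂ) *
            ∑ k : Fin p, (if (m : ℕ) = (k : ℕ) + 1 then (S j k : ℂ) else 0))
    (Fp1 : Fin (n + 1) → ℂ)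
    (hFp1 : Fp1 = fun m : Fin (n + 1) =>
      (if (m : ℕ) = 0 then (Real.sinh t : ℂ) else 0)
        + Complex.I * (Real.cosh t : ℂ) * (if (m : ℕ) = p + 1 then 1 else 0))
    (F : Fin (n + 1) → (Fin (n + 1) → ℂ))
    (hF : ∀ k : Fin (n + 1), F k = fun m : Fin (n + 1) =>
      Complex.I * ((Real.sinh t / t : ℝ) : ℂ) * (if m = k then 1 else 0))
    (ω : (Fin (n + 1) → ℂ) → (Fin (n + 1) → ℂ) → ℝ)
    (hω : ∀ x y, ω x y =
      a * ∑ k : Fin n, ((starRingEnd ℂ) (x k.succ) * y k.succ).im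
        + b * ((starRingEnd ℂ) (x ⟨p + 1, by omega⟩) * y ⟨p + 1, by omega⟩).im) :
    ∀ x ∈ Submodule.span ℝ
        (Set.range E ∪ {Fp1} ∪ {w | ∃ k : Fin (n + 1), p + 2 ≤ (k : ℕ) ∧ w = F k}),
      ∀ y ∈ Submodule.span ℝ
        (Set.range E ∪ {Fp1} ∪ {w | ∃ k : Fin (n + 1), p + 2 ≤ (k : ℕ) ∧ w = F k}),
        ω x y = 0 := by
  have E_eq : E = tangentVector (tangentIndex hpn.le) (Real.cosh t) (Real.sinh t) S := by
    ext j m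
    simp only [hE, tangentVector_apply, tangentIndex, Fin.ext_iff, Fin.val_succ, Fin.val_castLE]
  have Fp1_eq :
      Fp1 = Pi.single 0 (Real.sinh t : ℂ) + Pi.single (Fin.succ ⟨p, hpn⟩) (I * Real.cosh t) := by
    ext m
    simp only [hFp1, Pi.add_apply, Pi.single_apply, Fin.ext_iff, Fin.val_zero, Fin.val_succ,
      mul_ite, mul_one, mul_zero]
  have F_eq (k : Fin (n + 1)) : F k = Pi.single k (I * (Real.sinh t / t : ℝ)) := by
    ext m
    simp only [hF, Pi.single_apply, mul_ite, mul_one, mul_zero]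
  have ω_eq (x y) : ω x y = weightedKahlerForm (stenzelWeight a b ⟨p, hpn⟩) x y := by
    rw [hω, weightedKahlerForm_stenzelWeight, Fin.succ_mk]
  intro x hx y hy
  rw [Set.union_assoc, E_eq] at hx hy
  rw [ω_eq]
  refine weightedKahlerForm_eq_zero_of_mem_span hS (tangentIndex_injective hpn.le)
    (stenzelWeight_tangentIndex hpn a b) ?_ hx hy
  rintro _ (rfl | ⟨k, hk, rfl⟩)
  · exact Fp1_eq ▸ single_zero_add_single_mem_conormalSubspace hpn a b _ _
  · exact F_eq k ▸ single_I_mul_mem_conormalSubspace (tangentIndex_ne_of_lt hpn.le (by omega)) _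
end
end

section
/- Let n > p ≥ 1, let λ₁, …, λ_p ∈ ℝ and t > 0. In ℂⁿ⁺¹ with standard basis e₀, …, e_n define z = cosh(t)·e₀ + i·sinh(t)·e_{p+1}, E_j = (cosh(t) + i λ_j sinh(t))·e_j for 1 ≤ j ≤ p, F_{p+1} = sinh(t)·e₀ + i·cosh(t)·e_{p+1}, and F_k = i·(sinh(t)/t)·e_k for p+2 ≤ k ≤ n. Then the determinant of the (n+1)×(n+1) complex matrix whose rows are z, E₁, …, E_p, F_{p+1}, …, F_n equals i^{n−p} · (sinh(t)/t)^{n−p−1} · ∏_{j=1}^{p} (cosh(t) + i λ_j sinh(t)). In particular, its product with i^{p−n} has vanishing imaginary part for all t > 0 if and only if Im ∏_{j=1}^{p}(1 + i λ_j tanh(t)) = 0 for all t > 0. -/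
/-!
STATEMENT 12: the evaluation of the holomorphic volume form of the quadric on
the tangent space of the conormal bundle.  The matrix M(t) has rows
z = cosh t·e₀ + i sinh t·e_{p+1}, E_j = (cosh t + i λⱼ sinh t)·e_j (1 ≤ j ≤ p),
F_{p+1} = sinh t·e₀ + i cosh t·e_{p+1}, and F_k = i (sinh t / t)·e_k
(p+2 ≤ k ≤ n).  Its determinant is
i^{n−p} (sinh t / t)^{n−p−1} ∏ⱼ (cosh t + i λⱼ sinh t); in particular
Im(i^{p−n}·det M(t)) = 0 for all t > 0 iff
Im ∏ⱼ (1 + i λⱼ tanh t) = 0 for all t > 0.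
-/

noncomputable section

/-!
Listing the indices `0, p + 1` first makes the matrix block diagonal: a `2 × 2` block of determinant
`i (cosh² t - sinh² t) = i`, followed by a diagonal block.  Pulling `cosh t` out of each factor
`cosh t + i λⱼ sinh t` then exhibits `i^{p-n} det M(t)` as a nonzero real multiple of
`∏ⱼ (1 + i λⱼ tanh t)`.
-/

section ConormalFrame

open Complex Matrix

lemma prod_cosh_add_mul_sinh {ι : Type*} [Fintype ι] (l : ι → ℝ) (t : ℝ) :
    ∏ j, ((Real.cosh t : ℂ) + I * (l j : ℂ) * (Real.sinh t : ℂ)) =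
      (Real.cosh t : ℂ) ^ Fintype.card ι * ∏ j, (1 + I * (l j : ℂ) * (Real.tanh t : ℂ)) := by
  have hcosh : (Real.cosh t : ℂ) ≠ 0 := ofReal_ne_zero.2 (Real.cosh_pos t).ne'
  rw [← Finset.card_univ, ← Finset.prod_const, ← Finset.prod_mul_distrib]
  refine Finset.prod_congr rfl fun j _ => ?_
  rw [Real.tanh_eq_sinh_div_cosh, ofReal_div]
  field_simp

/-- The frame `z, E₁, …, E_p, F_{p+1}, …, F_n` adapted to the conormal bundle at distance `t` from
the zero section, written as the rows of a matrix; `l` lists the principal curvatures, so `λⱼ` is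
`l (j - 1)`. -/
def conormalFrame (n : ℕ) {p : ℕ} (l : Fin p → ℝ) (t : ℝ) :
    Matrix (Fin (n + 1)) (Fin (n + 1)) ℂ :=
  Matrix.of fun i j =>
    if hi₀ : (i : ℕ) = 0 then
      if (j : ℕ) = 0 then (Real.cosh t : ℂ)
      else if (j : ℕ) = p + 1 then I * (Real.sinh t : ℂ) else 0
    else if hi : (i : ℕ) ≤ p then
      if (j : ℕ) = (i : ℕ) then
        (Real.cosh t : ℂ) + I * (l ⟨(i : ℕ) - 1, by omega⟩ : ℂ) * (Real.sinh t : ℂ)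
      else 0
    else if (i : ℕ) = p + 1 then
      if (j : ℕ) = 0 then (Real.sinh t : ℂ)
      else if (j : ℕ) = p + 1 then I * (Real.cosh t : ℂ) else 0
    else if j = i then I * ((Real.sinh t / t : ℝ) : ℂ) else 0

variable {n p : ℕ}

/-- The inclusion of the three index groups `{0, p + 1}`, `{1, …, p}` and `{p + 2, …, n}` of the
conormal frame into `{0, …, n}`. -/
def frameIndex (hpn : p < n) : Fin 2 ⊕ Fin p ⊕ Fin (n - p - 1) → Fin (n + 1)
  | .inl 0 => 0
  | .inl 1 => ⟨p + 1, by omega⟩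
  | .inr (.inl j) => ⟨j + 1, by omega⟩
  | .inr (.inr k) => ⟨p + 2 + k, by omega⟩

lemma frameIndex_injective (hpn : p < n) : Function.Injective (frameIndex hpn) := by
  simp only [Function.Injective, Sum.forall, Fin.forall_fin_two, frameIndex, Fin.ext_iff]
  and_intros <;> grind

lemma frameIndex_bijective (hpn : p < n) : Function.Bijective (frameIndex hpn) := by
  refine (Fintype.bijective_iff_injective_and_card _).2 ⟨frameIndex_injective hpn, ?_⟩
  simp only [Fintype.card_sum, Fintype.card_fin]
  omega

lemma conormalFrame_submatrix_frameIndex (hpn : p < n) (l : Fin p → ℝ) (t : ℝ) :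
    (conormalFrame n l t).submatrix (frameIndex hpn) (frameIndex hpn) =
      fromBlocks !![(Real.cosh t : ℂ), I * Real.sinh t; (Real.sinh t : ℂ), I * Real.cosh t] 0 0
        (diagonal (Sum.elim (fun j => (Real.cosh t : ℂ) + I * l j * Real.sinh t)
          fun _ => I * ((Real.sinh t / t : ℝ) : ℂ))) := by
  simp only [← Matrix.ext_iff, Sum.forall, Fin.forall_fin_two, submatrix_apply, frameIndex,
    conormalFrame, of_apply, fromBlocks_apply₁₁, fromBlocks_apply₁₂, fromBlocks_apply₂₁,
    fromBlocks_apply₂₂, diagonal_apply, Sum.elim_inl, Sum.elim_inr, Matrix.zero_apply,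
    cons_val_zero, cons_val_one, cons_val_fin_one, Fin.val_zero]
  and_intros <;> grind

lemma det_conormalFrame (hpn : p < n) (l : Fin p → ℝ) (t : ℝ) :
    (conormalFrame n l t).det =
      I ^ (n - p) * ((Real.sinh t / t : ℝ) : ℂ) ^ (n - p - 1)
        * ∏ j, ((Real.cosh t : ℂ) + I * (l j : ℂ) * (Real.sinh t : ℂ)) := by
  have hpyth : (Real.cosh t : ℂ) ^ 2 - (Real.sinh t : ℂ) ^ 2 = 1 :=
    mod_cast Real.cosh_sq_sub_sinh_sq t
  have hblock : (Real.cosh t : ℂ) * (I * Real.cosh t) - I * Real.sinh t * Real.sinh t = I := by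
    linear_combination I * hpyth
  have hpow : I ^ (n - p) = I * I ^ (n - p - 1) := by
    rw [← pow_succ', Nat.sub_add_cancel (by omega)]
  rw [← det_submatrix_equiv_self (Equiv.ofBijective _ (frameIndex_bijective hpn)),
    Equiv.coe_ofBijective, conormalFrame_submatrix_frameIndex, det_fromBlocks_zero₂₁,
    det_fin_two_of, hblock, det_diagonal, Fintype.prod_sum_type]
  simp only [Sum.elim_inl, Sum.elim_inr, Finset.prod_const, Finset.card_univ, Fintype.card_fin]
  rw [hpow]
  ring

lemma I_zpow_mul_det_conormalFrame (hpn : p < n) (l : Fin p → ℝ) (t : ℝ) :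
    I ^ ((p : ℤ) - (n : ℤ)) * (conormalFrame n l t).det =
      (((Real.sinh t / t) ^ (n - p - 1) * Real.cosh t ^ p : ℝ) : ℂ)
        * ∏ j, (1 + I * (l j : ℂ) * (Real.tanh t : ℂ)) := by
  have hphase : I ^ ((p : ℤ) - (n : ℤ)) * I ^ (n - p) = 1 := by
    rw [← zpow_natCast, ← zpow_add₀ I_ne_zero, Nat.cast_sub hpn.le, sub_add_sub_cancel, sub_self,
      zpow_zero]
  rw [det_conormalFrame hpn, prod_cosh_add_mul_sinh, Fintype.card_fin,
    ofReal_mul, ofReal_pow, ofReal_pow]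
  linear_combination (((Real.sinh t / t : ℝ) : ℂ) ^ (n - p - 1) * (Real.cosh t : ℂ) ^ p
    * ∏ j, (1 + I * (l j : ℂ) * (Real.tanh t : ℂ))) * hphase

lemma im_I_zpow_mul_det_conormalFrame_eq_zero_iff (hpn : p < n) (l : Fin p → ℝ) {t : ℝ}
    (ht : t ≠ 0) :
    (I ^ ((p : ℤ) - (n : ℤ)) * (conormalFrame n l t).det).im = 0 ↔
      (∏ j, (1 + I * (l j : ℂ) * (Real.tanh t : ℂ))).im = 0 := by
  have hscale : (Real.sinh t / t) ^ (n - p - 1) * Real.cosh t ^ p ≠ 0 :=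
    mul_ne_zero (pow_ne_zero _ (div_ne_zero (Real.sinh_ne_zero.2 ht) ht))
      (pow_ne_zero _ (Real.cosh_pos t).ne')
  rw [I_zpow_mul_det_conormalFrame hpn, im_ofReal_mul, mul_eq_zero, or_iff_right hscale]

end ConormalFrame

theorem stmt12 (n p : ℕ) (hp : 1 ≤ p) (hpn : p < n) (l : Fin p → ℝ)
    (M : ℝ → Matrix (Fin (n + 1)) (Fin (n + 1)) ℂ)
    (hM : ∀ t : ℝ, M t = Matrix.of fun i j : Fin (n + 1) =>
      if (i : ℕ) = 0 then
        (if (j : ℕ) = 0 then (Real.cosh t : ℂ)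
          else if (j : ℕ) = p + 1 then Complex.I * (Real.sinh t : ℂ) else 0)
      else if hi : (i : ℕ) ≤ p then
        (if (j : ℕ) = (i : ℕ) then
          (Real.cosh t : ℂ) + Complex.I * (l ⟨(i : ℕ) - 1, by omega⟩ : ℂ) * (Real.sinh t : ℂ)
         else 0)
      else if (i : ℕ) = p + 1 then
        (if (j : ℕ) = 0 then (Real.sinh t : ℂ)
          else if (j : ℕ) = p + 1 then Complex.I * (Real.cosh t : ℂ) else 0)
      else (if j = i then Complex.I * ((Real.sinh t / t : ℝ) : ℂ) else 0)) :
    (∀ t : ℝ, 0 < t →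
      (M t).det = Complex.I ^ (n - p) * ((Real.sinh t / t : ℝ) : ℂ) ^ (n - p - 1)
        * ∏ j, ((Real.cosh t : ℂ) + Complex.I * (l j : ℂ) * (Real.sinh t : ℂ)))
    ∧ ((∀ t : ℝ, 0 < t → (Complex.I ^ ((p : ℤ) - (n : ℤ)) * (M t).det).im = 0)
        ↔ (∀ t : ℝ, 0 < t →
            (∏ j, (1 + Complex.I * (l j : ℂ) * (Real.tanh t : ℂ))).im = 0)) := by
  obtain rfl : M = conormalFrame n l := funext hM
  exact ⟨fun t _ => det_conormalFrame hpn l t,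
    forall₂_congr fun t ht => im_I_zpow_mul_det_conormalFrame_eq_zero_iff hpn l ht.ne'⟩
end
end

section
/- Fix u, v > 0 and real numbers A¹₁₁, A¹₁₂, A¹₂₂, A²₁₁, A²₁₂, A²₂₂. In ℝ⁷ with standard basis e₀, e₁, e₂, e₃, f₁, f₂, f₃, for t₁ ∈ ℝ define E₁ = e₀ + t₁[(−A¹₁₁ − A²₁₂) f₃ + (−A¹₁₂ + A²₁₁) f₂], E₂ = e₁ + t₁[(−A¹₁₂ − A²₂₂) f₃ + (−A¹₂₂ + A²₁₂) f₂], and F₁ = f₁. Then the 3-dimensional subspace span_ℝ{E₁, E₂, F₁} is closed under the cross product ×_{u,v} for every t₁ ∈ ℝ if and only if A¹₁₁ + A¹₂₂ = 0 and A²₁₁ + A²₂₂ = 0. (This is the pointwise linear-algebra content of the theorem that the line bundle L = span(vol_Σ − ∗vol_Σ) over a surface Σ ⊂ X⁴ is associative in Λ²₋(T*X⁴) with the Bryant–Salamon G₂ metric if and only if Σ is minimal.) -/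
/-!
STATEMENT 13: the pointwise linear-algebra content of: the line bundle
L = span(vol_Σ − ∗vol_Σ) over a surface Σ ⊂ X⁴ is associative in Λ²₋(T*X⁴)
with the Bryant–Salamon G₂ metric iff Σ is minimal.
-/

noncomputable section

/-- The Bryant–Salamon G₂ 3-form
φ_{u,v} = v³ f¹∧f²∧f³ + u²v [f¹∧(e⁰∧e¹ − e²∧e³) + f²∧(e⁰∧e² − e³∧e¹)
          + f³∧(e⁰∧e³ − e¹∧e²)]. -/
def phiBS (u v : ℝ) (a b c : V7) : ℝ :=
  v ^ 3 * form3 4 5 6 a b c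
    + u ^ 2 * v * (form3 4 0 1 a b c - form3 4 2 3 a b c
        + form3 5 0 2 a b c - form3 5 3 1 a b c
        + form3 6 0 3 a b c - form3 6 1 2 a b c)

/-- The cross product ×_{u,v} determined by
g_{u,v}(a ×_{u,v} b, z) = φ_{u,v}(a,b,z), where
g_{u,v} = u²(dx₀²+dx₁²+dx₂²+dx₃²) + v²(dy₁²+dy₂²+dy₃²). -/
def crossBS (u v : ℝ) (a b : V7) : V7 :=
  fun k => phiBS u v a b (e7 k) / (if (k : ℕ) < 4 then u ^ 2 else v ^ 2)

/-!
For `E₁ = e₀ + p f₂ + q f₃` and `E₂ = e₁ + r f₂ + s f₃` the cross product `E₁ × E₂` is a multiple of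
`f₁` plus `-v (q + r) e₂ + v (p - s) e₃`. Since `span {E₁, E₂, f₁}` has no `e₂`- and
`e₃`-components, closedness forces the Cauchy–Riemann equations `r = -q`, `s = p`, i.e. complex
linearity of `e₀ ↦ p f₂ + q f₃`, `e₁ ↦ r f₂ + s f₃` for the complex structure `v⁻¹ f₁ ×`.
Conversely, under these equations `f₁ × E₁ = v E₂` and `f₁ × E₂ = -v E₁`. Inserting the
coefficients `t A`, the Cauchy–Riemann equations say that `t` times the mean curvature vanishes.
-/

section AlternatingOnSpan

variable {R M N : Type*} [CommRing R] [AddCommGroup M] [Module R M] [AddCommGroup N] [Module R N]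

theorem isAlt_apply_mem_of_mem_span_triple {B : M →ₗ[R] M →ₗ[R] N} (hB : B.IsAlt)
    {P : Submodule R N} {x y z : M} (hxy : B x y ∈ P) (hzx : B z x ∈ P) (hzy : B z y ∈ P)
    {a b : M} (ha : a ∈ Submodule.span R {x, y, z}) (hb : b ∈ Submodule.span R {x, y, z}) :
    B a b ∈ P := by
  have swap_mem {c d : M} (h : B c d ∈ P) : B d c ∈ P := by
    rw [← hB.neg c d]
    exact P.neg_mem h
  have self_mem (c : M) : B c c ∈ P := by
    rw [hB.self_eq_zero c]
    exact P.zero_mem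
  refine LinearMap.BilinMap.apply_apply_mem_of_mem_span P _ _ B ?_ a b ha hb
  rintro _ (rfl | rfl | rfl) _ (rfl | rfl | rfl)
  exacts [self_mem _, hxy, swap_mem hzx, swap_mem hxy, self_mem _, swap_mem hzy, hzx, hzy,
    self_mem _]

end AlternatingOnSpan

section CrossProduct

variable (u v : ℝ) (a a' b c : V7)

theorem form3_apply (i j k : Fin 7) :
    form3 i j k a b c =
      a i * b j * c k - a i * b k * c j - a j * b i * c k
        + a j * b k * c i + a k * b i * c j - a k * b j * c i := by
  simp [form3, Matrix.det_fin_three]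

theorem phiBS_add_left : phiBS u v (a + a') b c = phiBS u v a b c + phiBS u v a' b c := by
  simp only [phiBS, form3_apply, Pi.add_apply]
  ring

theorem phiBS_smul_left (k : ℝ) : phiBS u v (k • a) b c = k * phiBS u v a b c := by
  simp only [phiBS, form3_apply, Pi.smul_apply, smul_eq_mul]
  ring

theorem phiBS_swap : phiBS u v b a c = -phiBS u v a b c := by
  simp only [phiBS, form3_apply]
  ring

theorem crossBS_add_left : crossBS u v (a + a') b = crossBS u v a b + crossBS u v a' b := by
  funext j
  simp only [crossBS, phiBS_add_left, add_div, Pi.add_apply]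

theorem crossBS_smul_left (k : ℝ) : crossBS u v (k • a) b = k • crossBS u v a b := by
  funext j
  simp only [crossBS, phiBS_smul_left, mul_div_assoc, Pi.smul_apply, smul_eq_mul]

theorem crossBS_swap : crossBS u v b a = -crossBS u v a b := by
  funext j
  simp only [crossBS, phiBS_swap u v a b, neg_div, Pi.neg_apply]

/-- The cross product `×_{u,v}` bundled as a bilinear map. -/
def crossBilin : V7 →ₗ[ℝ] V7 →ₗ[ℝ] V7 :=
  LinearMap.mk₂ ℝ (crossBS u v) (crossBS_add_left u v)
    (fun k a b => crossBS_smul_left u v a b k)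
    (fun a b b' => by
      rw [crossBS_swap, crossBS_add_left, neg_add, ← crossBS_swap, ← crossBS_swap])
    (fun k a b => by
      rw [crossBS_swap, crossBS_smul_left, ← smul_neg, ← crossBS_swap])

theorem crossBilin_apply : crossBilin u v a b = crossBS u v a b := rfl

theorem isAlt_crossBilin : (crossBilin u v).IsAlt := fun a =>
  self_eq_neg.mp (crossBS_swap u v a a)

/-- Closedness of a subspace of `ℝ⁷` under the cross product `×_{u,v}`; for 3-dimensional subspaces
this is the associativity condition of G₂ geometry. -/
def IsCrossClosed (S : Submodule ℝ V7) : Prop :=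
  ∀ a ∈ S, ∀ b ∈ S, crossBS u v a b ∈ S

end CrossProduct

/-- The vector `e_k + p f₂ + q f₃`, a horizontal basis vector tilted in the fibre directions
normal to `f₁`. -/
def tilted (k : Fin 7) (p q : ℝ) : V7 := e7 k + (p • e7 5 + q • e7 6)

/-- The span of `e₀ + p f₂ + q f₃`, `e₁ + r f₂ + s f₃` and `f₁`: the graph over `span {e₀, e₁}` of
the linear map with coefficients `p, q, r, s` into the fibre plane `span {f₂, f₃}`, plus the line
through `f₁`. -/
def tiltedSpan (p q r s : ℝ) : Submodule ℝ V7 :=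
  Submodule.span ℝ {tilted 0 p q, tilted 1 r s, e7 4}

section TiltedSpan

variable {u v : ℝ} (p q r s : ℝ)

theorem crossBS_tilted_tilted (hu : u ≠ 0) (hv : v ≠ 0) :
    crossBS u v (tilted 0 p q) (tilted 1 r s) =
      (u ^ 2 / v + v * (p * s - q * r)) • e7 4 - (v * (q + r)) • e7 2 + (v * (p - s)) • e7 3 := by
  funext j
  fin_cases j <;> simp [crossBS, phiBS, form3_apply, e7, tilted] <;>
    field_simp <;> ring

theorem crossBS_e7_four_tilted_zero (hu : u ≠ 0) (hv : v ≠ 0) :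
    crossBS u v (e7 4) (tilted 0 p q) = v • tilted 1 (-q) p := by
  funext j
  fin_cases j <;> simp [crossBS, phiBS, form3_apply, e7, tilted] <;> field_simp

theorem crossBS_e7_four_tilted_one (hu : u ≠ 0) (hv : v ≠ 0) :
    crossBS u v (e7 4) (tilted 1 r s) = -v • tilted 0 s (-r) := by
  funext j
  fin_cases j <;> simp [crossBS, phiBS, form3_apply, e7, tilted] <;> field_simp

variable {p q r s}

theorem apply_two_three_eq_zero_of_mem_tiltedSpan {w : V7}
    (hw : w ∈ tiltedSpan p q r s) : w 2 = 0 ∧ w 3 = 0 := by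
  obtain ⟨x, y, z, rfl⟩ := Submodule.mem_span_triple.mp hw
  simp [tilted, e7]

theorem cauchyRiemann_of_isCrossClosed_tiltedSpan (hu : u ≠ 0) (hv : v ≠ 0)
    (h : IsCrossClosed u v (tiltedSpan p q r s)) : r = -q ∧ s = p := by
  have cross_mem : crossBS u v (tilted 0 p q) (tilted 1 r s) ∈ tiltedSpan p q r s :=
    h _ (Submodule.subset_span (by simp)) _ (Submodule.subset_span (by simp))
  rw [crossBS_tilted_tilted p q r s hu hv] at cross_mem
  obtain ⟨coord_two, coord_three⟩ :=
    apply_two_three_eq_zero_of_mem_tiltedSpan cross_mem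
  have sum_eq_zero : q + r = 0 := by simpa [e7, hv] using coord_two
  have diff_eq_zero : p - s = 0 := by simpa [e7, hv] using coord_three
  exact ⟨eq_neg_of_add_eq_zero_right sum_eq_zero, (sub_eq_zero.mp diff_eq_zero).symm⟩

theorem isCrossClosed_tiltedSpan_of_cauchyRiemann (hu : u ≠ 0) (hv : v ≠ 0)
    (hCR : r = -q ∧ s = p) : IsCrossClosed u v (tiltedSpan p q r s) := by
  obtain ⟨rfl, rfl⟩ := hCR
  have mem_first : tilted 0 s q ∈ tiltedSpan s q (-q) s := Submodule.subset_span (by simp)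
  have mem_second : tilted 1 (-q) s ∈ tiltedSpan s q (-q) s := Submodule.subset_span (by simp)
  have mem_third : e7 4 ∈ tiltedSpan s q (-q) s := Submodule.subset_span (by simp)
  intro a ha b hb
  refine isAlt_apply_mem_of_mem_span_triple (isAlt_crossBilin u v) ?_ ?_ ?_ ha hb
  · rw [crossBilin_apply, crossBS_tilted_tilted _ _ _ _ hu hv, add_neg_cancel, sub_self, mul_zero,
      zero_smul, zero_smul, sub_zero, add_zero]
    exact Submodule.smul_mem _ _ mem_third
  · rw [crossBilin_apply, crossBS_e7_four_tilted_zero _ _ hu hv]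
    exact Submodule.smul_mem _ _ mem_second
  · rw [crossBilin_apply, crossBS_e7_four_tilted_one _ _ hu hv, neg_neg]
    exact Submodule.smul_mem _ _ mem_first

theorem isCrossClosed_tiltedSpan_iff (hu : u ≠ 0) (hv : v ≠ 0) :
    IsCrossClosed u v (tiltedSpan p q r s) ↔ r = -q ∧ s = p :=
  ⟨cauchyRiemann_of_isCrossClosed_tiltedSpan hu hv,
    isCrossClosed_tiltedSpan_of_cauchyRiemann hu hv⟩

end TiltedSpan

theorem e7_add_smul_eq_tilted (k : Fin 7) (t p q : ℝ) :
    e7 k + t • (q • e7 6 + p • e7 5) = tilted k (t * p) (t * q) := by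
  rw [tilted, smul_add, smul_smul, smul_smul, add_comm ((t * q) • e7 6)]

theorem stmt13 (u v : ℝ) (hu : 0 < u) (hv : 0 < v)
    (A111 A112 A122 A211 A212 A222 : ℝ) :
    (∀ t1 : ℝ, ∀ S : Submodule ℝ V7,
      S = Submodule.span ℝ
        ({e7 0 + t1 • ((-A111 - A212) • e7 6 + (-A112 + A211) • e7 5),
          e7 1 + t1 • ((-A112 - A222) • e7 6 + (-A122 + A212) • e7 5),
          e7 4} : Set V7) →
      ∀ a ∈ S, ∀ b ∈ S, crossBS u v a b ∈ S)
    ↔ (A111 + A122 = 0 ∧ A211 + A222 = 0) := by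
  simp only [forall_eq, e7_add_smul_eq_tilted]
  change (∀ t : ℝ, IsCrossClosed u v (tiltedSpan _ _ _ _)) ↔ _
  simp only [isCrossClosed_tiltedSpan_iff hu.ne' hv.ne']
  constructor
  · intro cauchyRiemann
    obtain ⟨first, second⟩ := cauchyRiemann 1
    constructor <;> linarith
  · rintro ⟨trace_first, trace_second⟩ t
    constructor
    · linear_combination -t * trace_first
    · linear_combination -t * trace_second
end
end

section
/- Fix u, v > 0 and real numbers A¹₁₁, A¹₁₂, A¹₂₂, A²₁₁, A²₁₂, A²₂₂. In ℝ⁷ with standard basis e₀, e₁, e₂, e₃, f₁, f₂, f₃, for (t₂, t₃) ∈ ℝ² set A^ν_{jk} = t₂ A¹_{jk} + t₃ A²_{jk} and A^{ν⊥}_{jk} = −t₃ A¹_{jk} + t₂ A²_{jk}, and define E₁ = e₀ + (A^ν₁₂ − A^{ν⊥}₁₁) f₁, E₂ = e₁ + (A^ν₂₂ − A^{ν⊥}₁₂) f₁, F₂ = f₂, F₃ = f₃. Then φ_{u,v}(a,b,c) = 0 for all a, b, c ∈ span_ℝ{E₁, E₂, F₂, F₃} for every (t₂,t₃) ∈ ℝ²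 if and only if A¹₁₂ = A²₁₁, A²₁₂ = −A¹₁₁, A¹₂₂ = A²₁₂, and A²₂₂ = −A¹₁₂. (This is the pointwise linear-algebra content of the theorem that the rank-2 bundle L^⊥ over a surface Σ ⊂ X⁴ is coassociative in Λ²₋(T*X⁴) with the Bryant–Salamon G₂ metric if and only if Σ is a properly oriented real isotropic (superminimal) surface.) -/
/-!
STATEMENT 14: the pointwise linear-algebra content of: the rank-2 bundle L⊥
over a surface Σ ⊂ X⁴ is coassociative in Λ²₋(T*X⁴) with the Bryant–Salamon
G₂ metric iff Σ is properly oriented real isotropic (superminimal).  With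
A^ν = t₂A¹ + t₃A², A^{ν⊥} = −t₃A¹ + t₂A², E₁ = e₀ + (A^ν₁₂ − A^{ν⊥}₁₁) f₁,
E₂ = e₁ + (A^ν₂₂ − A^{ν⊥}₁₂) f₁, F₂ = f₂, F₃ = f₃: φ_{u,v} vanishes on
span{E₁,E₂,F₂,F₃} for all (t₂,t₃) iff A¹₁₂ = A²₁₁, A²₁₂ = −A¹₁₁,
A¹₂₂ = A²₁₂ and A²₂₂ = −A¹₁₂.
-/

noncomputable section

/-!
Contracting `φ` with `f₂` and `f₃` leaves `v³ f¹`, so `φ` can vanish on a subspace containing `f₂`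
and `f₃` only if the subspace has no `f₁`-component. Conversely `span {e₀, e₁, f₂, f₃}` is cut out
by `e² = e³ = f¹ = 0`, and each monomial of `φ` contains one of these three covectors. Hence the
condition is the vanishing of the `f₁`-coefficients of `E₁` and `E₂`, which are linear in
`(t₂, t₃)`.
-/

/-- `φ_{u,v}` restricts to zero on `S`: the Harvey–Lawson condition for a 4-dimensional `S` to be
coassociative. The dimension of `S` is not part of the predicate. -/
def PhiBSVanishesOn (u v : ℝ) (S : Submodule ℝ V7) : Prop :=
  ∀ a ∈ S, ∀ b ∈ S, ∀ c ∈ S, phiBS u v a b c = 0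

/-- The coassociative coordinate plane `span {e₀, e₁, f₂, f₃}`, encoded by its equations
`x₂ = x₃ = y₁ = 0`. -/
def modelPlane : Submodule ℝ V7 := Submodule.pi {2, 3, 4} fun _ => ⊥

/-- The plane `span {e₀ + x f₁, e₁ + y f₁, f₂, f₃}`; the tangent spaces of `L^⊥` are of this form,
with `x` and `y` given by the second fundamental form. -/
def tiltedPlane (x y : ℝ) : Submodule ℝ V7 :=
  Submodule.span ℝ {e7 0 + x • e7 4, e7 1 + y • e7 4, e7 5, e7 6}

theorem mem_modelPlane {a : V7} : a ∈ modelPlane ↔ a 2 = 0 ∧ a 3 = 0 ∧ a 4 = 0 := by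
  simp [modelPlane, Submodule.mem_pi]

theorem form3_eq_zero_of_coord_eq_zero {p q r : Fin 7} {a b c : V7} (i : Fin 3)
    (ha : a (![p, q, r] i) = 0) (hb : b (![p, q, r] i) = 0) (hc : c (![p, q, r] i) = 0) :
    form3 p q r a b c = 0 := by
  refine Matrix.det_eq_zero_of_column_eq_zero i fun j => ?_
  fin_cases i <;> fin_cases j <;> assumption

theorem phiBSVanishesOn_modelPlane (u v : ℝ) : PhiBSVanishesOn u v modelPlane := by
  intro a ha b hb c hc
  obtain ⟨a2, a3, a4⟩ := mem_modelPlane.1 ha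
  obtain ⟨b2, b3, b4⟩ := mem_modelPlane.1 hb
  obtain ⟨c2, c3, c4⟩ := mem_modelPlane.1 hc
  rw [phiBS, form3_eq_zero_of_coord_eq_zero 0 a4 b4 c4, form3_eq_zero_of_coord_eq_zero 0 a4 b4 c4,
    form3_eq_zero_of_coord_eq_zero 0 a4 b4 c4, form3_eq_zero_of_coord_eq_zero 2 a2 b2 c2,
    form3_eq_zero_of_coord_eq_zero 1 a3 b3 c3, form3_eq_zero_of_coord_eq_zero 2 a3 b3 c3,
    form3_eq_zero_of_coord_eq_zero 2 a2 b2 c2]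
  ring

theorem PhiBSVanishesOn.mono {u v : ℝ} {S T : Submodule ℝ V7} (hT : PhiBSVanishesOn u v T)
    (hST : S ≤ T) : PhiBSVanishesOn u v S :=
  fun a ha b hb c hc => hT a (hST ha) b (hST hb) c (hST hc)

theorem phiBS_e7_five_e7_six (u v : ℝ) (a : V7) : phiBS u v a (e7 5) (e7 6) = v ^ 3 * a 4 := by
  simp [phiBS, form3, e7, Matrix.det_fin_three]

theorem PhiBSVanishesOn.apply_four_eq_zero {u v : ℝ} (hv : v ≠ 0) {S : Submodule ℝ V7}
    (hS : PhiBSVanishesOn u v S) (h5 : e7 5 ∈ S) (h6 : e7 6 ∈ S) {a : V7} (ha : a ∈ S) :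
    a 4 = 0 := by
  have hφ : v ^ 3 * a 4 = 0 := by
    rw [← phiBS_e7_five_e7_six u, hS a ha _ h5 _ h6]
  exact (mul_eq_zero.1 hφ).resolve_left (pow_ne_zero 3 hv)

theorem tiltedPlane_zero_zero_le_modelPlane : tiltedPlane 0 0 ≤ modelPlane := by
  rw [tiltedPlane, Submodule.span_le]
  rintro w (rfl | rfl | rfl | rfl) <;> simp [mem_modelPlane, e7]

theorem phiBSVanishesOn_tiltedPlane_iff {u v : ℝ} (hv : v ≠ 0) {x y : ℝ} :
    PhiBSVanishesOn u v (tiltedPlane x y) ↔ x = 0 ∧ y = 0 := by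
  constructor
  · intro h
    have apply_four_of_generator (w : V7)
        (hw : w ∈ ({e7 0 + x • e7 4, e7 1 + y • e7 4, e7 5, e7 6} : Set V7)) : w 4 = 0 :=
      h.apply_four_eq_zero hv (Submodule.subset_span (by simp)) (Submodule.subset_span (by simp))
        (Submodule.subset_span hw)
    have hx := apply_four_of_generator (e7 0 + x • e7 4) (by simp)
    have hy := apply_four_of_generator (e7 1 + y • e7 4) (by simp)
    exact ⟨by simpa [e7] using hx, by simpa [e7] using hy⟩
  · rintro ⟨rfl, rfl⟩
    exact (phiBSVanishesOn_modelPlane u v).mono tiltedPlane_zero_zero_le_modelPlane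

theorem forall_mul_add_mul_sub_eq_zero_iff {R : Type*} [Ring R] {a b c d : R} :
    (∀ s t : R, (s * a + t * b) - (-t * c + s * d) = 0) ↔ a = d ∧ b = -c := by
  constructor
  · intro h
    have had : a - d = 0 := by simpa using h 1 0
    have hbc : b + c = 0 := by simpa using h 0 1
    exact ⟨sub_eq_zero.1 had, eq_neg_of_add_eq_zero_left hbc⟩
  · rintro ⟨rfl, rfl⟩ s t
    noncomm_ring

theorem stmt14 (u v : ℝ) (hu : 0 < u) (hv : 0 < v)
    (A111 A112 A122 A211 A212 A222 : ℝ) :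
    (∀ t2 t3 : ℝ, ∀ S : Submodule ℝ V7,
      S = Submodule.span ℝ
        ({e7 0 + ((t2 * A112 + t3 * A212) - (-t3 * A111 + t2 * A211)) • e7 4,
          e7 1 + ((t2 * A122 + t3 * A222) - (-t3 * A112 + t2 * A212)) • e7 4,
          e7 5, e7 6} : Set V7) →
      ∀ a ∈ S, ∀ b ∈ S, ∀ c ∈ S, phiBS u v a b c = 0)
    ↔ (A112 = A211 ∧ A212 = -A111 ∧ A122 = A212 ∧ A222 = -A112) := by
  calc
    _ ↔ ∀ t2 t3 : ℝ, PhiBSVanishesOn u v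
          (tiltedPlane ((t2 * A112 + t3 * A212) - (-t3 * A111 + t2 * A211))
            ((t2 * A122 + t3 * A222) - (-t3 * A112 + t2 * A212))) := by
      simp only [forall_eq, PhiBSVanishesOn, tiltedPlane]
    _ ↔ (∀ t2 t3 : ℝ, (t2 * A112 + t3 * A212) - (-t3 * A111 + t2 * A211) = 0) ∧
          ∀ t2 t3 : ℝ, (t2 * A122 + t3 * A222) - (-t3 * A112 + t2 * A212) = 0 := by
      simp only [phiBSVanishesOn_tiltedPlane_iff hv.ne', forall_and]
    _ ↔ _ := by
      simp only [forall_mul_add_mul_sub_eq_zero_iff, and_assoc]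
end
end
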